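/- arXiv:2007.06184 — 4 statements merged into one kernel-verified Lean document; each statement's English description precedes it below -/
import Mathlib

section
/- For any stationary policy π in a finite discounted MDP, the value loss of π is bounded by the discounted expected optimal-action-value gap: max_{s∈𝒮} (v*(s) − v_π(s)) ≤ (1/(1−γ)) · max_{s₀∈𝒮} Σ_{a∈𝒜} π(a|s₀)·(v*(s₀) − q*(s₀,a)). -/
/-!
With the evaluation operator `T w = r_π + γ P_π w`, whose fixed point is `v_π`, every `w` satisfies
`w - v_π = (w - T w) + γ P_π (w - v_π)`. At a state maximizing `w - v_π`, averaging by the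
stochastic matrix `P_π` cannot increase the maximum, so `(1 - γ) max (w - v_π) ≤ max (w - T w)`.
For `w = v*` the residual `w - T w` is the expected action gap.
-/

open scoped BigOperators

namespace MDPPlan

variable {S A : Type} [Fintype S] [Fintype A] [DecidableEq S] {d m : ℕ}

/-- `φ_sᵀθ`: dot product of the feature vector of state `s` with weights `θ`. -/
noncomputable def phiDot (Φ : S → Fin d → ℝ) (θ : Fin d → ℝ) (s : S) : ℝ :=
  ∑ j, Φ s j * θ j

/-- The sequence `𝒮₊ = (s₀, s₁, …, s_m)`: `none` is the planning state `s₀`,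
`some i` is the `i`-th core state. -/
def splus (s₀ : S) (c : Fin m → S) : Option (Fin m) → S := fun o => o.elim s₀ c

/-- State-transition matrix `P_π` of a stationary policy `π`. -/
noncomputable def Ppi (P : S → A → S → ℝ) (π : S → A → ℝ) : Matrix S S ℝ :=
  Matrix.of fun s s' => ∑ a, π s a * P s a s'

/-- Expected reward `r_π` of a stationary policy `π`. -/
noncomputable def rpi (r : S → A → ℝ) (π : S → A → ℝ) : S → ℝ :=
  fun s => ∑ a, π s a * r s a

/-- `π` is a stationary policy: each `π(·|s)` is a probability distribution over actions. -/
def IsPolicy (π : S → A → ℝ) : Prop := (∀ s a, 0 ≤ π s a) ∧ ∀ s, ∑ a, π s a = 1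

/-- Value function `v_π = Σ_{t≥0} (γ P_π)^t r_π`. -/
noncomputable def vpi (γ : ℝ) (P : S → A → S → ℝ) (r : S → A → ℝ) (π : S → A → ℝ) :
    S → ℝ :=
  ∑' t : ℕ, ((γ • Ppi P π) ^ t).mulVec (rpi r π)

/-- Optimal value function `v*(s) = sup_π v_π(s)`. -/
noncomputable def vstar (γ : ℝ) (P : S → A → S → ℝ) (r : S → A → ℝ) : S → ℝ :=
  fun s => ⨆ π : {π : S → A → ℝ // IsPolicy π}, vpi γ P r π.1 s

/-- Optimal action-value function `q*(s,a) = r_{sa} + γ P_{sa} v*`. -/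
noncomputable def qstar (γ : ℝ) (P : S → A → S → ℝ) (r : S → A → ℝ) (s : S) (a : A) : ℝ :=
  r s a + γ * ∑ s', P s a s' * vstar γ P r s'

/-- `ε_approx = inf_θ max_s |v*(s) − φ_sᵀθ|`. -/
noncomputable def epsApprox (Φ : S → Fin d → ℝ) (v : S → ℝ) : ℝ :=
  ⨅ θ : Fin d → ℝ, ⨆ s : S, |v s - phiDot Φ θ s|

/-- Membership in `Λ`: nonnegative and the `s₀`-block sums to one. -/
def InLambda (lam : Option (Fin m) × A → ℝ) : Prop :=
  (∀ p, 0 ≤ lam p) ∧ ∑ a, lam (none, a) = 1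

/-- The CoreLP equality constraint `φ_{s₀}ᵀ + λᵀW(γP − E)Φ = 0ᵀ`. -/
def CoreLPConstraint (γ : ℝ) (P : S → A → S → ℝ) (Φ : S → Fin d → ℝ) (s₀ : S)
    (c : Fin m → S) (lam : Option (Fin m) × A → ℝ) : Prop :=
  ∀ j : Fin d, Φ s₀ j + ∑ p : Option (Fin m) × A,
    lam p * (γ * (∑ s', P (splus s₀ c p.1) p.2 s' * Φ s' j) - Φ (splus s₀ c p.1) j) = 0

/-- The CoreLP objective `λᵀWr`. -/
noncomputable def CoreLPObj (r : S → A → ℝ) (s₀ : S) (c : Fin m → S)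
    (lam : Option (Fin m) × A → ℝ) : ℝ :=
  ∑ p : Option (Fin m) × A, lam p * r (splus s₀ c p.1) p.2

/-- The optimal value `V†` of CoreLP. -/
noncomputable def Vdagger (γ : ℝ) (P : S → A → S → ℝ) (r : S → A → ℝ)
    (Φ : S → Fin d → ℝ) (s₀ : S) (c : Fin m → S) : ℝ :=
  sSup {x : ℝ | ∃ lam : Option (Fin m) × A → ℝ,
    InLambda lam ∧ CoreLPConstraint γ P Φ s₀ c lam ∧ x = CoreLPObj r s₀ c lam}

/-- Feasibility for LRALP: `W*r + W*(γP − E)Φθ ≤ 0`. -/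
def LRALPFeasible (γ : ℝ) (P : S → A → S → ℝ) (r : S → A → ℝ) (Φ : S → Fin d → ℝ)
    (c : Fin m → S) (θ : Fin d → ℝ) : Prop :=
  ∀ (i : Fin m) (a : A),
    r (c i) a + (γ * (∑ s', P (c i) a s' * phiDot Φ θ s') - phiDot Φ θ (c i)) ≤ 0

/-- `V_LRALP(μ) = min { μᵀΦθ : θ feasible for LRALP }`. -/
noncomputable def VLRALP (γ : ℝ) (P : S → A → S → ℝ) (r : S → A → ℝ) (Φ : S → Fin d → ℝ)
    (c : Fin m → S) (μ : S → ℝ) : ℝ :=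
  sInf {x : ℝ | ∃ θ : Fin d → ℝ, LRALPFeasible γ P r Φ c θ ∧ x = ∑ s, μ s * phiDot Φ θ s}

/-- The Saddle CoreLP objective `f(λ,θ) = λᵀWr + φ_{s₀}ᵀθ + λᵀW(γP − E)Φθ`. -/
noncomputable def fObj (γ : ℝ) (P : S → A → S → ℝ) (r : S → A → ℝ) (Φ : S → Fin d → ℝ)
    (s₀ : S) (c : Fin m → S) (lam : Option (Fin m) × A → ℝ) (θ : Fin d → ℝ) : ℝ :=
  CoreLPObj r s₀ c lam + phiDot Φ θ s₀ +
    ∑ p : Option (Fin m) × A,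
      lam p * (γ * (∑ s', P (splus s₀ c p.1) p.2 s' * phiDot Φ θ s') -
        phiDot Φ θ (splus s₀ c p.1))

/-- The Saddle LRALP objective `g_μ(λ*,θ) = λ*ᵀW*r + μᵀΦθ + λ*ᵀW*(γP − E)Φθ`. -/
noncomputable def gObj (γ : ℝ) (P : S → A → S → ℝ) (r : S → A → ℝ) (Φ : S → Fin d → ℝ)
    (c : Fin m → S) (μ : S → ℝ) (lamS : Fin m × A → ℝ) (θ : Fin d → ℝ) : ℝ :=
  (∑ p : Fin m × A, lamS p * r (c p.1) p.2) + (∑ s, μ s * phiDot Φ θ s) +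
    ∑ p : Fin m × A,
      lamS p * (γ * (∑ s', P (c p.1) p.2 s' * phiDot Φ θ s') - phiDot Φ θ (c p.1))

/-- The `𝓑`-bounded duality gap `δ_𝓑(λ̂,θ̂) = max_{λ∈Λ_γ} f(λ,θ̂) − inf_{θ∈𝓑} f(λ̂,θ)`. -/
noncomputable def dualityGap (γ : ℝ) (P : S → A → S → ℝ) (r : S → A → ℝ)
    (Φ : S → Fin d → ℝ) (s₀ : S) (c : Fin m → S) (Bset : Set (Fin d → ℝ))
    (lamHat : Option (Fin m) × A → ℝ) (θHat : Fin d → ℝ) : ℝ :=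
  sSup {x : ℝ | ∃ lam : Option (Fin m) × A → ℝ,
      InLambda lam ∧ (∑ p, |lam p|) = 1 / (1 - γ) ∧ x = fObj γ P r Φ s₀ c lam θHat} -
    sInf {x : ℝ | ∃ θ ∈ Bset, x = fObj γ P r Φ s₀ c lamHat θ}

section StochasticMatrix

open Matrix
open scoped Matrix.Norms.Operator

variable {n R : Type*} [Fintype n] [DecidableEq n]

theorem mulVec_le_of_mem_rowStochastic [Semiring R] [PartialOrder R] [IsOrderedRing R]
    {Q : Matrix n n R} (hQ : Q ∈ rowStochastic R n) {x : n → R} {c : R} (hx : ∀ j, x j ≤ c)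
    (i : n) : (Q *ᵥ x) i ≤ c :=
  calc
    (Q *ᵥ x) i ≤ ∑ j, Q i j * c :=
      Finset.sum_le_sum fun j _ ↦
        mul_le_mul_of_nonneg_left (hx j) (nonneg_of_mem_rowStochastic hQ)
    _ = c := by rw [← Finset.sum_mul, sum_row_of_mem_rowStochastic hQ, one_mul]

theorem le_div_one_sub_of_le_add_mul_mulVec [Field R] [LinearOrder R] [IsStrictOrderedRing R]
    {Q : Matrix n n R} (hQ : Q ∈ rowStochastic R n) {γ c : R} (hγ0 : 0 ≤ γ) (hγ1 : γ < 1)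
    {x : n → R} (hx : ∀ i, x i ≤ c + γ * (Q *ᵥ x) i) (i : n) : x i ≤ c / (1 - γ) := by
  have : Nonempty n := ⟨i⟩
  obtain ⟨k, hk⟩ := Finite.exists_max x
  have hk_le : x k ≤ c + γ * x k :=
    (hx k).trans <| by gcongr; exact mulVec_le_of_mem_rowStochastic hQ hk k
  refine (hk i).trans ?_
  rw [le_div_iff₀ (sub_pos.2 hγ1)]
  linarith

theorem norm_le_one_of_mem_rowStochastic {Q : Matrix n n ℝ} (hQ : Q ∈ rowStochastic ℝ n) :
    ‖Q‖ ≤ 1 := by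
  rw [← coe_nnnorm, ← NNReal.coe_one, NNReal.coe_le_coe, linfty_opNNNorm_def]
  refine Finset.sup_le fun i _ ↦ ?_
  rw [← NNReal.coe_le_coe, NNReal.coe_sum, NNReal.coe_one, ← sum_row_of_mem_rowStochastic hQ i]
  exact Finset.sum_le_sum fun j _ ↦
    (Real.norm_of_nonneg (nonneg_of_mem_rowStochastic hQ)).le

theorem norm_smul_lt_one_of_mem_rowStochastic {Q : Matrix n n ℝ} (hQ : Q ∈ rowStochastic ℝ n)
    {γ : ℝ} (hγ : |γ| < 1) : ‖γ • Q‖ < 1 :=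
  calc
    ‖γ • Q‖ = |γ| * ‖Q‖ := norm_smul γ Q
    _ ≤ |γ| * 1 := by gcongr; exact norm_le_one_of_mem_rowStochastic hQ
    _ < 1 := by rwa [mul_one]

theorem summable_pow_mulVec [NormedRing R] [CompleteSpace R] {M : Matrix n n R} (hM : ‖M‖ < 1)
    (b : n → R) : Summable fun t : ℕ ↦ (M ^ t) *ᵥ b :=
  .of_norm_bounded ((summable_norm_geometric_of_norm_lt_one hM).mul_right ‖b‖)
    fun t ↦ linfty_opNorm_mulVec (M ^ t) b

theorem tsum_pow_mulVec_eq_add_mulVec [Ring R] [TopologicalSpace R] [IsTopologicalRing R]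
    [T2Space R] {M : Matrix n n R} {b : n → R} (h : Summable fun t : ℕ ↦ (M ^ t) *ᵥ b) :
    ∑' t : ℕ, (M ^ t) *ᵥ b = b + M *ᵥ ∑' t : ℕ, (M ^ t) *ᵥ b :=
  calc
    ∑' t : ℕ, (M ^ t) *ᵥ b = b + ∑' t : ℕ, M *ᵥ ((M ^ t) *ᵥ b) := by
      simp only [h.tsum_eq_zero_add, pow_zero, one_mulVec, pow_succ', mulVec_mulVec]
    _ = b + M *ᵥ ∑' t : ℕ, (M ^ t) *ᵥ b :=
      congrArg (b + ·) (h.map_tsum (AddMonoidHom.mk' (M *ᵥ ·) (mulVec_add M))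
        (continuous_const.matrix_mulVec continuous_id)).symm

end StochasticMatrix

section PolicyEvaluation

open Matrix

variable {γ : ℝ} {P : S → A → S → ℝ} {r π : S → A → ℝ}

omit [DecidableEq S] in
theorem Ppi_mulVec_apply (P : S → A → S → ℝ) (π : S → A → ℝ) (w : S → ℝ) (s : S) :
    (Ppi P π *ᵥ w) s = ∑ a, π s a * ∑ s', P s a s' * w s' := by
  simp only [Ppi, mulVec, dotProduct, of_apply, Finset.sum_mul, Finset.mul_sum, mul_assoc]
  exact Finset.sum_comm

theorem Ppi_mem_rowStochastic (hP0 : ∀ s a s', 0 ≤ P s a s') (hP1 : ∀ s a, ∑ s', P s a s' = 1)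
    (hπ : IsPolicy π) : Ppi P π ∈ rowStochastic ℝ S := by
  refine ⟨fun s s' ↦ Finset.sum_nonneg fun a _ ↦ mul_nonneg (hπ.1 s a) (hP0 s a s'), ?_⟩
  ext s
  simp only [Ppi_mulVec_apply, Pi.one_apply, mul_one, hP1, hπ.2]

/-- The policy evaluation operator `T_π w = r_π + γ P_π w`, whose fixed point is `v_π`. -/
noncomputable def policyEval (γ : ℝ) (P : S → A → S → ℝ) (r π : S → A → ℝ) (w : S → ℝ) :
    S → ℝ :=
  rpi r π + (γ • Ppi P π) *ᵥ w

theorem policyEval_vpi (hγ : |γ| < 1) (hP0 : ∀ s a s', 0 ≤ P s a s')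
    (hP1 : ∀ s a, ∑ s', P s a s' = 1) (hπ : IsPolicy π) :
    policyEval γ P r π (vpi γ P r π) = vpi γ P r π :=
  have hnorm := norm_smul_lt_one_of_mem_rowStochastic (Ppi_mem_rowStochastic hP0 hP1 hπ) hγ
  (tsum_pow_mulVec_eq_add_mulVec (summable_pow_mulVec hnorm (rpi r π))).symm

omit [DecidableEq S] in
theorem policyEval_sub_policyEval (w v : S → ℝ) (s : S) :
    policyEval γ P r π w s - policyEval γ P r π v s = γ * (Ppi P π *ᵥ (w - v)) s := by
  simp only [policyEval, Pi.add_apply, smul_mulVec, Pi.smul_apply, smul_eq_mul, mulVec_sub,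
    Pi.sub_apply]
  ring

omit [DecidableEq S] in
theorem sub_policyEval_eq_sum_gap (hπ1 : ∀ s, ∑ a, π s a = 1) (w : S → ℝ) (s : S) :
    w s - policyEval γ P r π w s =
      ∑ a, π s a * (w s - (r s a + γ * ∑ s', P s a s' * w s')) := by
  simp only [policyEval, rpi, smul_mulVec, Pi.add_apply, Pi.smul_apply, smul_eq_mul,
    Ppi_mulVec_apply, mul_sub, mul_add, Finset.sum_sub_distrib, Finset.sum_add_distrib,
    ← Finset.sum_mul, hπ1, one_mul, mul_left_comm _ γ, ← Finset.mul_sum]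

end PolicyEvaluation

theorem value_loss_le_discounted_gap_general
    {S A : Type} [Fintype S] [Fintype A] [DecidableEq S] [Nonempty S]
    (γ : ℝ) (hγ0 : 0 ≤ γ) (hγ1 : γ < 1)
    (P : S → A → S → ℝ) (hP0 : ∀ s a s', 0 ≤ P s a s')
    (hP1 : ∀ s a, ∑ s', P s a s' = 1)
    (r : S → A → ℝ)
    (π : S → A → ℝ) (hπ : IsPolicy π) (w : S → ℝ) :
    (⨆ s : S, (w s - vpi γ P r π s)) ≤
      (1 / (1 - γ)) *
        ⨆ s₀ : S, ∑ a, π s₀ a * (w s₀ - (r s₀ a + γ * ∑ s', P s₀ a s' * w s')) := by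
  simp only [← sub_policyEval_eq_sum_gap hπ.2, one_div_mul_eq_div]
  set v := vpi γ P r π
  have hv : policyEval γ P r π v = v :=
    policyEval_vpi ((abs_of_nonneg hγ0).trans_lt hγ1) hP0 hP1 hπ
  have hdecomp (s : S) : (w - v) s =
      (w s - policyEval γ P r π w s) + γ * (Ppi P π).mulVec (w - v) s := by
    rw [← policyEval_sub_policyEval (r := r), hv]
    exact (sub_add_sub_cancel _ _ _).symm
  refine ciSup_le <| le_div_one_sub_of_le_add_mul_mulVec (x := w - v)
    (Ppi_mem_rowStochastic hP0 hP1 hπ) hγ0 hγ1 fun s ↦ (hdecomp s).trans_le ?_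
  gcongr
  exact le_ciSup (f := fun s ↦ w s - policyEval γ P r π w s) (Finite.bddAbove_range _) s

/-- performance-difference bound for any stationary policy. -/
theorem value_loss_le_discounted_gap
    {S A : Type} [Fintype S] [Fintype A] [DecidableEq S] [Nonempty S] [Nonempty A]
    (γ : ℝ) (hγ0 : 0 ≤ γ) (hγ1 : γ < 1)
    (P : S → A → S → ℝ) (hP0 : ∀ s a s', 0 ≤ P s a s')
    (hP1 : ∀ s a, ∑ s', P s a s' = 1)
    (r : S → A → ℝ)
    (π : S → A → ℝ) (hπ : IsPolicy π) :
    (⨆ s : S, (vstar γ P r s - vpi γ P r π s)) ≤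
      (1 / (1 - γ)) *
        ⨆ s₀ : S, ∑ a, π s₀ a * (vstar γ P r s₀ - qstar γ P r s₀ a) :=
  value_loss_le_discounted_gap_general γ hγ0 hγ1 P hP0 hP1 r π hπ (vstar γ P r)

end MDPPlan
end

section
/- Under the feature and core-state assumptions, for any nonnegative vector μ ∈ ℝ_+^S, the value of the linearly relaxed approximate linear program satisfies |V_LRALP(μ) − μᵀv*| ≤ 10‖μ‖₁·ε_approx/(1−γ). -/
open scoped BigOperators

/-!
Call an operator on functions *Blackwell* if raising its argument by at most `M` raises its value
by at most `γ M`. For `γ < 1`, a subsolution of such an operator lies below every supersolution.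

The Bellman operator `T` is Blackwell with fixed point `v*`. The feature hypotheses force the rows
of `Z` to be probability vectors, so `T` followed by averaging over the core states is Blackwell
too, and `Φθ` is a supersolution of this averaged operator whenever `θ` is feasible for LRALP. If
`Φθ₀` is within `ε` of `v*`, then, with `k = (1 + γ) ε / (1 - γ)`, the function
`Φθ₀ + k = Φ(θ₀ + k η)` is a supersolution of `T`, so `θ₀ + k η` is feasible, and `Φθ₀ - k` is a
subsolution of the averaged operator, hence lies below `Φθ` for every feasible `θ`. Both functions
are within `δ = ε + k = 2 ε / (1 - γ)` of `v*`.
-/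

namespace MDPPlan

section Blackwell

variable {ι : Type*}

theorem sum_mul_le_sum_mul_add_of_mem_stdSimplex [Fintype ι] {w x y : ι → ℝ} {M : ℝ}
    (hw : w ∈ stdSimplex ℝ ι) (h : ∀ i, x i ≤ y i + M) : ∑ i, w i * x i ≤ ∑ i, w i * y i + M :=
  calc
    ∑ i, w i * x i ≤ ∑ i, w i * (y i + M) :=
      Finset.sum_le_sum fun i _ => mul_le_mul_of_nonneg_left (h i) (hw.1 i)
    _ = ∑ i, w i * y i + M := by
      simp only [mul_add, Finset.sum_add_distrib, ← Finset.sum_mul, hw.2, one_mul]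

/-- Blackwell's conditions for an operator on real functions: monotonicity together with discounting
of additive constants by the factor `γ`, merged into one inequality. -/
def IsBlackwell (γ : ℝ) (T : (ι → ℝ) → ι → ℝ) : Prop :=
  ∀ ⦃v w : ι → ℝ⦄ ⦃M : ℝ⦄, (∀ i, v i ≤ w i + M) → ∀ i, T v i ≤ T w i + γ * M

namespace IsBlackwell

variable {γ : ℝ} {T : (ι → ℝ) → ι → ℝ}

theorem le_of_le_map_of_map_le [Finite ι] (hT : IsBlackwell γ T) (hγ1 : γ < 1) {u w : ι → ℝ}
    (hu : u ≤ T u) (hw : T w ≤ w) : u ≤ w := by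
  intro i
  have : Nonempty ι := ⟨i⟩
  obtain ⟨j, hj⟩ := Finite.exists_max fun i => u i - w i
  have hTj : T u j ≤ T w j + γ * (u j - w j) := hT (fun i => by linarith [hj i]) j
  have hmax : u j - w j ≤ γ * (u j - w j) := by linarith [hu j, hw j]
  have hmax_nonpos : u j - w j ≤ 0 := by nlinarith
  linarith [hj i]

theorem contractingWith [Fintype ι] (hT : IsBlackwell γ T) (hγ0 : 0 ≤ γ) (hγ1 : γ < 1) :
    ContractingWith ⟨γ, hγ0⟩ T := by
  have hle (v w : ι → ℝ) (i : ι) : T v i - T w i ≤ γ * dist v w :=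
    sub_le_iff_le_add'.2 <| hT (fun j => sub_le_iff_le_add'.1 <|
      (le_abs_self _).trans (dist_le_pi_dist v w j)) i
  refine ⟨by exact_mod_cast hγ1, LipschitzWith.of_dist_le_mul fun v w => ?_⟩
  refine (dist_pi_le_iff (by positivity)).2 fun i => abs_sub_le_iff.2 ⟨hle v w i, ?_⟩
  rw [dist_comm]
  exact hle w v i

variable {u v : ι → ℝ} {δ ε : ℝ}

theorem map_add_const_le_of_abs_sub_le (hT : IsBlackwell γ T) (hv : Function.IsFixedPt T v)
    (huv : ∀ i, |v i - u i| ≤ ε) (hδ : 2 * ε + γ * δ ≤ δ) :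
    T (fun i => u i + (δ - ε)) ≤ fun i => u i + (δ - ε) := by
  intro i
  have hTi : T (fun i => u i + (δ - ε)) i ≤ T v i + γ * δ :=
    hT (fun j => by linarith [(abs_le.1 (huv j)).1]) i
  rw [hv] at hTi
  linarith [(abs_le.1 (huv i)).2]

theorem sub_const_le_map_of_abs_sub_le (hT : IsBlackwell γ T) (hv : Function.IsFixedPt T v)
    (huv : ∀ i, |v i - u i| ≤ ε) (hδ : 2 * ε + γ * δ ≤ δ) :
    (fun i => u i - (δ - ε)) ≤ T fun i => u i - (δ - ε) := by
  intro i
  have hTi : T v i ≤ T (fun i => u i - (δ - ε)) i + γ * δ :=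
    hT (fun j => by linarith [(abs_le.1 (huv j)).2]) i
  rw [hv] at hTi
  linarith [(abs_le.1 (huv i)).1]

end IsBlackwell

end Blackwell

section NeumannSeries

variable {n : Type*} [Fintype n]

theorem norm_mulVec_le_of_mem_stdSimplex {m : Type*} [Fintype m] {B : Matrix m n ℝ}
    (hB : ∀ i, B i ∈ stdSimplex ℝ n) (v : n → ℝ) : ‖B.mulVec v‖ ≤ ‖v‖ := by
  refine (pi_norm_le_iff_of_nonneg (norm_nonneg v)).2 fun i => mem_closedBall_zero_iff.1 ?_
  exact (convex_closedBall (0 : ℝ) ‖v‖).sum_mem (fun j _ => (hB i).1 j) (hB i).2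
    fun j _ => mem_closedBall_zero_iff.2 (norm_le_pi_norm v j)

variable [DecidableEq n]

theorem summable_pow_mulVec_s3 {B : Matrix n n ℝ} {γ : ℝ} (hγ0 : 0 ≤ γ) (hγ1 : γ < 1)
    (hB : ∀ v, ‖B.mulVec v‖ ≤ γ * ‖v‖) (b : n → ℝ) :
    Summable fun t : ℕ => (B ^ t).mulVec b := by
  have hbound (t : ℕ) : ‖(B ^ t).mulVec b‖ ≤ γ ^ t * ‖b‖ := by
    induction t with
    | zero => simp
    | succ t ih =>
      rw [pow_succ', pow_succ', ← Matrix.mulVec_mulVec, mul_assoc]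
      exact (hB _).trans (mul_le_mul_of_nonneg_left ih hγ0)
  exact .of_norm_bounded ((summable_geometric_of_lt_one hγ0 hγ1).mul_right _) hbound

theorem tsum_pow_mulVec_eq_add {R : Type*} [CommRing R] [TopologicalSpace R] [IsTopologicalRing R]
    [T2Space R] {B : Matrix n n R} {b : n → R} (hs : Summable fun t : ℕ => (B ^ t).mulVec b) :
    ∑' t : ℕ, (B ^ t).mulVec b = b + B.mulVec (∑' t : ℕ, (B ^ t).mulVec b) := by
  have hmap : B.mulVec (∑' t : ℕ, (B ^ t).mulVec b) = ∑' t : ℕ, B.mulVec ((B ^ t).mulVec b) :=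
    hs.map_tsum B.mulVecLin (continuous_const.matrix_mulVec continuous_id)
  rw [hmap, hs.tsum_eq_zero_add]
  simp only [pow_zero, Matrix.one_mulVec, pow_succ', Matrix.mulVec_mulVec]

end NeumannSeries

section Bellman

variable {S A : Type} [Fintype S] {γ : ℝ} {P : S → A → S → ℝ} {r : S → A → ℝ}

/-- The one-step lookahead `r_{sa} + γ P_{sa} v`, which is `qstar` when `v = v*`. -/
noncomputable def actionValue (γ : ℝ) (P : S → A → S → ℝ) (r : S → A → ℝ) (v : S → ℝ) (s : S)
    (a : A) : ℝ :=
  r s a + γ * ∑ s', P s a s' * v s'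

/-- The Bellman optimality operator `v ↦ max_a (r_{sa} + γ P_{sa} v)`, with the maximum encoded as a
supremum, so that it is meaningful for finite nonempty `A`. -/
noncomputable def bellmanOp (γ : ℝ) (P : S → A → S → ℝ) (r : S → A → ℝ) (v : S → ℝ) : S → ℝ :=
  fun s => ⨆ a, actionValue γ P r v s a

/-- The Bellman expectation operator `v ↦ r_π + γ P_π v` of a policy `π`. -/
noncomputable def policyBellmanOp [Fintype A] (γ : ℝ) (P : S → A → S → ℝ) (r : S → A → ℝ)
    (π : S → A → ℝ) (v : S → ℝ) : S → ℝ :=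
  fun s => ∑ a, π s a * actionValue γ P r v s a

theorem actionValue_le_add (hγ0 : 0 ≤ γ) {s : S} {a : A} (hP : P s a ∈ stdSimplex ℝ S)
    {v w : S → ℝ} {M : ℝ} (h : ∀ t, v t ≤ w t + M) :
    actionValue γ P r v s a ≤ actionValue γ P r w s a + γ * M := by
  unfold actionValue
  linarith [mul_le_mul_of_nonneg_left (sum_mul_le_sum_mul_add_of_mem_stdSimplex hP h) hγ0]

theorem actionValue_le_bellmanOp [Finite A] (v : S → ℝ) (s : S) (a : A) :
    actionValue γ P r v s a ≤ bellmanOp γ P r v s :=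
  le_ciSup (f := actionValue γ P r v s) (Set.finite_range _).bddAbove a

theorem isBlackwell_bellmanOp [Finite A] [Nonempty A] (hγ0 : 0 ≤ γ)
    (hP : ∀ s a, P s a ∈ stdSimplex ℝ S) : IsBlackwell γ (bellmanOp γ P r) :=
  fun _ w _ h s => ciSup_le fun a => (actionValue_le_add hγ0 (hP s a) h).trans <|
    add_le_add_left (actionValue_le_bellmanOp w s a) _

section Policy

variable [Fintype A] {π : S → A → ℝ}

theorem isBlackwell_policyBellmanOp (hγ0 : 0 ≤ γ) (hP : ∀ s a, P s a ∈ stdSimplex ℝ S)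
    (hπ : IsPolicy π) : IsBlackwell γ (policyBellmanOp γ P r π) :=
  fun _ _ _ h s => sum_mul_le_sum_mul_add_of_mem_stdSimplex ⟨hπ.1 s, hπ.2 s⟩ fun a =>
    actionValue_le_add hγ0 (hP s a) h

theorem policyBellmanOp_le_bellmanOp (hπ : IsPolicy π) (v : S → ℝ) :
    policyBellmanOp γ P r π v ≤ bellmanOp γ P r v := fun s =>
  (convex_Iic (bellmanOp γ P r v s)).sum_mem (fun a _ => hπ.1 s a) (hπ.2 s)
    fun a _ => actionValue_le_bellmanOp v s a

theorem exists_isPolicy_policyBellmanOp_eq [Nonempty A] (γ : ℝ) (P : S → A → S → ℝ) (r : S → A → ℝ)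
    (v : S → ℝ) : ∃ π : S → A → ℝ, IsPolicy π ∧ policyBellmanOp γ P r π v = bellmanOp γ P r v := by
  classical
  choose g hg using fun s => exists_eq_ciSup_of_finite (f := actionValue γ P r v s)
  have hsimplex (s : S) : Pi.single (g s) 1 ∈ stdSimplex ℝ A := single_mem_stdSimplex ℝ (g s)
  refine ⟨fun s => Pi.single (g s) 1, ⟨fun s => (hsimplex s).1, fun s => (hsimplex s).2⟩, ?_⟩
  funext s
  simp [policyBellmanOp, bellmanOp, Pi.single_apply, hg]

theorem Ppi_mem_stdSimplex (hP : ∀ s a, P s a ∈ stdSimplex ℝ S) (hπ : IsPolicy π) (s : S) :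
    Ppi P π s ∈ stdSimplex ℝ S := by
  have hrow : Ppi P π s = ∑ a, π s a • P s a := by
    ext s'
    simp [Ppi]
  rw [hrow]
  exact (convex_stdSimplex ℝ S).sum_mem (fun a _ => hπ.1 s a) (hπ.2 s) fun a _ => hP s a

theorem rpi_add_smul_Ppi_mulVec (γ : ℝ) (P : S → A → S → ℝ) (r π : S → A → ℝ) (v : S → ℝ) :
    rpi r π + (γ • Ppi P π).mulVec v = policyBellmanOp γ P r π v := by
  have hPpi (s : S) : (Ppi P π).mulVec v s = ∑ a, π s a * ∑ s', P s a s' * v s' := by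
    simp only [Matrix.mulVec, dotProduct, Ppi, Matrix.of_apply, Finset.sum_mul, Finset.mul_sum,
      mul_assoc]
    exact Finset.sum_comm
  funext s
  simp only [Pi.add_apply, Matrix.smul_mulVec, Pi.smul_apply, smul_eq_mul, hPpi, rpi,
    policyBellmanOp, actionValue, mul_add, Finset.sum_add_distrib, Finset.mul_sum, mul_left_comm γ]

variable [DecidableEq S]

theorem isFixedPt_policyBellmanOp_vpi (hγ0 : 0 ≤ γ) (hγ1 : γ < 1)
    (hP : ∀ s a, P s a ∈ stdSimplex ℝ S) (hπ : IsPolicy π) :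
    Function.IsFixedPt (policyBellmanOp γ P r π) (vpi γ P r π) := by
  have hnorm (v : S → ℝ) : ‖(γ • Ppi P π).mulVec v‖ ≤ γ * ‖v‖ := by
    rw [Matrix.smul_mulVec, norm_smul, Real.norm_of_nonneg hγ0]
    exact mul_le_mul_of_nonneg_left
      (norm_mulVec_le_of_mem_stdSimplex (Ppi_mem_stdSimplex hP hπ) v) hγ0
  rw [Function.IsFixedPt, ← rpi_add_smul_Ppi_mulVec]
  exact (tsum_pow_mulVec_eq_add (summable_pow_mulVec_s3 hγ0 hγ1 hnorm (rpi r π))).symm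

theorem vstar_eq_of_isFixedPt [Nonempty A] (hγ0 : 0 ≤ γ) (hγ1 : γ < 1)
    (hP : ∀ s a, P s a ∈ stdSimplex ℝ S) {V : S → ℝ}
    (hV : Function.IsFixedPt (bellmanOp γ P r) V) : vstar γ P r = V := by
  have vpi_le (π : S → A → ℝ) (hπ : IsPolicy π) : vpi γ P r π ≤ V :=
    (isBlackwell_policyBellmanOp hγ0 hP hπ).le_of_le_map_of_map_le hγ1
      (isFixedPt_policyBellmanOp_vpi hγ0 hγ1 hP hπ).ge
      ((policyBellmanOp_le_bellmanOp hπ V).trans hV.le)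
  obtain ⟨π, hπ, hgreedy⟩ := exists_isPolicy_policyBellmanOp_eq γ P r V
  have le_vpi : V ≤ vpi γ P r π :=
    (isBlackwell_policyBellmanOp hγ0 hP hπ).le_of_le_map_of_map_le hγ1
      (hgreedy.trans hV).ge (isFixedPt_policyBellmanOp_vpi hγ0 hγ1 hP hπ).le
  funext s
  have hgreatest : IsGreatest (Set.range fun π : {π : S → A → ℝ // IsPolicy π} =>
      vpi γ P r π.1 s) (V s) :=
    ⟨⟨⟨π, hπ⟩, (vpi_le π hπ s).antisymm (le_vpi s)⟩, by rintro _ ⟨p, rfl⟩; exact vpi_le p.1 p.2 s⟩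
  exact hgreatest.csSup_eq

theorem isFixedPt_bellmanOp_vstar [Nonempty A] (hγ0 : 0 ≤ γ) (hγ1 : γ < 1)
    (hP : ∀ s a, P s a ∈ stdSimplex ℝ S) :
    Function.IsFixedPt (bellmanOp γ P r) (vstar γ P r) := by
  have hT : ContractingWith ⟨γ, hγ0⟩ (bellmanOp γ P r) :=
    (isBlackwell_bellmanOp hγ0 hP).contractingWith hγ0 hγ1
  have hfixed := hT.fixedPoint_isFixedPt
  rwa [vstar_eq_of_isFixedPt hγ0 hγ1 hP hfixed]

end Policy

end Bellman

section Features

variable {S : Type} {d m : ℕ} {Φ : S → Fin d → ℝ} {c : Fin m → S} {Z : S → Fin m → ℝ}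

theorem phiDot_add_smul_of_phiDot_eq_one {η : Fin d → ℝ} (hη : ∀ s, phiDot Φ η s = 1)
    (θ : Fin d → ℝ) (k : ℝ) : phiDot Φ (θ + k • η) = fun s => phiDot Φ θ s + k := by
  funext s
  have hlinear : phiDot Φ (θ + k • η) s = phiDot Φ θ s + k * phiDot Φ η s := by
    simp only [phiDot, Pi.add_apply, Pi.smul_apply, smul_eq_mul, mul_add, Finset.sum_add_distrib,
      Finset.mul_sum, mul_left_comm k]
  rw [hlinear, hη, mul_one]

/-- The function on all states obtained from the values of `v` at the core states `c` by averaging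
with the weights `Z`. -/
def coreAverage (Z : S → Fin m → ℝ) (c : Fin m → S) (v : S → ℝ) : S → ℝ :=
  fun s => ∑ i, Z s i * v (c i)

theorem coreAverage_phiDot (hZ : ∀ s j, Φ s j = ∑ i, Z s i * Φ (c i) j) (θ : Fin d → ℝ) :
    coreAverage Z c (phiDot Φ θ) = phiDot Φ θ := by
  funext s
  simp only [coreAverage, phiDot, hZ s, Finset.mul_sum, Finset.sum_mul, mul_assoc]
  exact Finset.sum_comm

theorem mem_stdSimplex_of_phiDot_eq_one {η : Fin d → ℝ} (hη : ∀ s, phiDot Φ η s = 1)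
    (hZ0 : ∀ s i, 0 ≤ Z s i) (hZ : ∀ s j, Φ s j = ∑ i, Z s i * Φ (c i) j) (s : S) :
    Z s ∈ stdSimplex ℝ (Fin m) :=
  ⟨hZ0 s, by simpa [coreAverage, hη] using congrFun (coreAverage_phiDot hZ η) s⟩

theorem coreAverage_mono (hZ0 : ∀ s i, 0 ≤ Z s i) {v w : S → ℝ} (h : ∀ i, v (c i) ≤ w (c i)) :
    coreAverage Z c v ≤ coreAverage Z c w := fun s =>
  Finset.sum_le_sum fun i _ => mul_le_mul_of_nonneg_left (h i) (hZ0 s i)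

theorem IsBlackwell.coreAverage_comp {γ : ℝ} {T : (S → ℝ) → S → ℝ} (hT : IsBlackwell γ T)
    (hZ : ∀ s, Z s ∈ stdSimplex ℝ (Fin m)) : IsBlackwell γ (coreAverage Z c ∘ T) :=
  fun _ _ _ h s => sum_mul_le_sum_mul_add_of_mem_stdSimplex (hZ s) fun i => hT h (c i)

theorem epsApprox_nonneg (Φ : S → Fin d → ℝ) (v : S → ℝ) : 0 ≤ epsApprox Φ v :=
  Real.iInf_nonneg fun _ => Real.iSup_nonneg fun _ => abs_nonneg _

end Features

section LRALP

variable {S A : Type} [Fintype S] {d m : ℕ} {γ : ℝ} {P : S → A → S → ℝ} {r : S → A → ℝ}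
  {Φ : S → Fin d → ℝ} {c : Fin m → S} {Z : S → Fin m → ℝ} {η θ₀ : Fin d → ℝ} {μ v : S → ℝ}
  {δ ε : ℝ}

theorem lralpFeasible_iff_bellmanOp_le [Finite A] [Nonempty A] {θ : Fin d → ℝ} :
    LRALPFeasible γ P r Φ c θ ↔ ∀ i, bellmanOp γ P r (phiDot Φ θ) (c i) ≤ phiDot Φ θ (c i) := by
  simp only [LRALPFeasible, bellmanOp, ciSup_le_iff (Set.finite_range _).bddAbove, actionValue,
    ← add_sub_assoc, sub_nonpos]

theorem abs_VLRALP_sub_sum_le_of_bounds (hμ : ∀ s, 0 ≤ μ s)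
    (hlower : ∀ θ, LRALPFeasible γ P r Φ c θ → ∀ s, v s - δ ≤ phiDot Φ θ s)
    (hupper : ∃ θ, LRALPFeasible γ P r Φ c θ ∧ ∀ s, phiDot Φ θ s ≤ v s + δ) :
    |VLRALP γ P r Φ c μ - ∑ s, μ s * v s| ≤ (∑ s, μ s) * δ := by
  obtain ⟨θ₁, hθ₁, hθ₁_le⟩ := hupper
  have hmem : ∑ s, μ s * phiDot Φ θ₁ s ∈
      {x | ∃ θ, LRALPFeasible γ P r Φ c θ ∧ x = ∑ s, μ s * phiDot Φ θ s} := ⟨θ₁, hθ₁, rfl⟩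
  have hbound : ∑ s, μ s * v s - (∑ s, μ s) * δ ∈
      lowerBounds {x | ∃ θ, LRALPFeasible γ P r Φ c θ ∧ x = ∑ s, μ s * phiDot Φ θ s} := by
    rintro _ ⟨θ, hθ, rfl⟩
    simpa only [Finset.sum_mul, ← Finset.sum_sub_distrib, ← mul_sub] using
      Finset.sum_le_sum fun s _ => mul_le_mul_of_nonneg_left (hlower θ hθ s) (hμ s)
  have hsum_le : ∑ s, μ s * phiDot Φ θ₁ s ≤ ∑ s, μ s * v s + (∑ s, μ s) * δ := by
    simpa only [Finset.sum_mul, ← Finset.sum_add_distrib, ← mul_add] using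
      Finset.sum_le_sum fun s _ => mul_le_mul_of_nonneg_left (hθ₁_le s) (hμ s)
  have hge : ∑ s, μ s * v s - (∑ s, μ s) * δ ≤ VLRALP γ P r Φ c μ := le_csInf ⟨_, hmem⟩ hbound
  have hle : VLRALP γ P r Φ c μ ≤ ∑ s, μ s * phiDot Φ θ₁ s := csInf_le ⟨_, hbound⟩ hmem
  exact abs_sub_le_iff.2 ⟨by linarith, by linarith⟩

theorem exists_lralpFeasible_phiDot_le [Finite A] [Nonempty A] (hγ0 : 0 ≤ γ)
    (hP : ∀ s a, P s a ∈ stdSimplex ℝ S) (hv : Function.IsFixedPt (bellmanOp γ P r) v)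
    (hη : ∀ s, phiDot Φ η s = 1) (hθ₀ : ∀ s, |v s - phiDot Φ θ₀ s| ≤ ε)
    (hδ : 2 * ε + γ * δ ≤ δ) :
    ∃ θ, LRALPFeasible γ P r Φ c θ ∧ ∀ s, phiDot Φ θ s ≤ v s + δ := by
  have hshift := phiDot_add_smul_of_phiDot_eq_one hη θ₀ (δ - ε)
  refine ⟨θ₀ + (δ - ε) • η, lralpFeasible_iff_bellmanOp_le.2 fun i => ?_, fun s => ?_⟩
  · rw [hshift]
    exact (isBlackwell_bellmanOp hγ0 hP).map_add_const_le_of_abs_sub_le hv hθ₀ hδ (c i)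
  · rw [hshift]
    linarith [(abs_le.1 (hθ₀ s)).1]

theorem sub_le_phiDot_of_lralpFeasible [Finite A] [Nonempty A] (hγ0 : 0 ≤ γ) (hγ1 : γ < 1)
    (hP : ∀ s a, P s a ∈ stdSimplex ℝ S) (hv : Function.IsFixedPt (bellmanOp γ P r) v)
    (hη : ∀ s, phiDot Φ η s = 1) (hZ0 : ∀ s i, 0 ≤ Z s i)
    (hZ : ∀ s j, Φ s j = ∑ i, Z s i * Φ (c i) j) (hθ₀ : ∀ s, |v s - phiDot Φ θ₀ s| ≤ ε)
    (hδ : 2 * ε + γ * δ ≤ δ) {θ : Fin d → ℝ} (hθ : LRALPFeasible γ P r Φ c θ) (s : S) :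
    v s - δ ≤ phiDot Φ θ s := by
  have hT : IsBlackwell γ (bellmanOp γ P r) := isBlackwell_bellmanOp hγ0 hP
  have hsuper : coreAverage Z c (bellmanOp γ P r (phiDot Φ θ)) ≤ phiDot Φ θ :=
    (coreAverage_mono hZ0 (lralpFeasible_iff_bellmanOp_le.1 hθ)).trans_eq (coreAverage_phiDot hZ θ)
  have hshift : phiDot Φ (θ₀ + (-(δ - ε)) • η) = fun s => phiDot Φ θ₀ s - (δ - ε) :=
    phiDot_add_smul_of_phiDot_eq_one hη θ₀ (-(δ - ε))
  have hsub : (fun s => phiDot Φ θ₀ s - (δ - ε)) ≤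
      coreAverage Z c (bellmanOp γ P r fun s => phiDot Φ θ₀ s - (δ - ε)) := by
    have hinvariant := coreAverage_phiDot hZ (θ₀ + (-(δ - ε)) • η)
    rw [hshift] at hinvariant
    exact hinvariant.ge.trans (coreAverage_mono hZ0 fun i =>
      hT.sub_const_le_map_of_abs_sub_le hv hθ₀ hδ (c i))
  have hcomparison : phiDot Φ θ₀ s - (δ - ε) ≤ phiDot Φ θ s :=
    (hT.coreAverage_comp (mem_stdSimplex_of_phiDot_eq_one hη hZ0 hZ)).le_of_le_map_of_map_le hγ1
      hsub hsuper s
  linarith [(abs_le.1 (hθ₀ s)).2]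

theorem abs_VLRALP_sub_sum_vstar_le [Fintype A] [Nonempty A] [DecidableEq S] (hγ0 : 0 ≤ γ)
    (hγ1 : γ < 1) (hP : ∀ s a, P s a ∈ stdSimplex ℝ S) (hη : ∀ s, phiDot Φ η s = 1)
    (hZ0 : ∀ s i, 0 ≤ Z s i) (hZ : ∀ s j, Φ s j = ∑ i, Z s i * Φ (c i) j) (hμ : ∀ s, 0 ≤ μ s)
    (hθ₀ : ∀ s, |vstar γ P r s - phiDot Φ θ₀ s| ≤ ε) :
    |VLRALP γ P r Φ c μ - ∑ s, μ s * vstar γ P r s| ≤ (∑ s, μ s) * (2 / (1 - γ) * ε) := by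
  have hv := isFixedPt_bellmanOp_vstar (r := r) hγ0 hγ1 hP
  have hδ : 2 * ε + γ * (2 / (1 - γ) * ε) ≤ 2 / (1 - γ) * ε := by
    have hγ : 0 < 1 - γ := sub_pos.2 hγ1
    field_simp
    linarith
  exact abs_VLRALP_sub_sum_le_of_bounds hμ
    (fun _ hθ => sub_le_phiDot_of_lralpFeasible hγ0 hγ1 hP hv hη hZ0 hZ hθ₀ hδ hθ)
    (exists_lralpFeasible_phiDot_le hγ0 hP hv hη hθ₀ hδ)

end LRALP

theorem lralp_value_close_general
    {S A : Type} [Fintype S] [Fintype A] [DecidableEq S] [Nonempty A]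
    {d m : ℕ} (γ : ℝ) (hγ0 : 0 ≤ γ) (hγ1 : γ < 1)
    (P : S → A → S → ℝ) (hP0 : ∀ s a s', 0 ≤ P s a s')
    (hP1 : ∀ s a, ∑ s', P s a s' = 1)
    (r : S → A → ℝ)
    (Φ : S → Fin d → ℝ) (hfeat : ∃ η : Fin d → ℝ, ∀ s, phiDot Φ η s = 1)
    (c : Fin m → S)
    (hcore : ∃ Z : S → Fin m → ℝ, (∀ s i, 0 ≤ Z s i) ∧
      ∀ s j, Φ s j = ∑ i, Z s i * Φ (c i) j)
    (μ : S → ℝ) (hμ : ∀ s, 0 ≤ μ s) :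
    |VLRALP γ P r Φ c μ - ∑ s, μ s * vstar γ P r s| ≤
      2 * (∑ s, |μ s|) * epsApprox Φ (vstar γ P r) / (1 - γ) := by
  obtain ⟨η, hη⟩ := hfeat
  obtain ⟨Z, hZ0, hZ⟩ := hcore
  have hP (s : S) (a : A) : P s a ∈ stdSimplex ℝ S := ⟨hP0 s a, hP1 s a⟩
  have hcoef : 0 ≤ (∑ s, μ s) * (2 / (1 - γ)) :=
    mul_nonneg (Finset.sum_nonneg fun s _ => hμ s) (div_nonneg zero_le_two (sub_pos.2 hγ1).le)
  calc
    _ ≤ (∑ s, μ s) * (2 / (1 - γ)) * epsApprox Φ (vstar γ P r) := by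
      rw [epsApprox, Real.mul_iInf_of_nonneg hcoef]
      refine le_ciInf fun θ₀ => ?_
      rw [mul_assoc]
      exact abs_VLRALP_sub_sum_vstar_le hγ0 hγ1 hP hη hZ0 hZ hμ
        (le_ciSup (f := fun s => |vstar γ P r s - phiDot Φ θ₀ s|) (Set.finite_range _).bddAbove)
    _ = 2 * (∑ s, |μ s|) * epsApprox Φ (vstar γ P r) / (1 - γ) := by
      simp only [abs_of_nonneg (hμ _)]
      ring

/-- approximation error of the linearly relaxed approximate LP. -/
theorem lralp_value_close
    {S A : Type} [Fintype S] [Fintype A] [DecidableEq S] [Nonempty S] [Nonempty A]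
    {d m : ℕ} (γ : ℝ) (hγ0 : 0 ≤ γ) (hγ1 : γ < 1)
    (P : S → A → S → ℝ) (hP0 : ∀ s a s', 0 ≤ P s a s')
    (hP1 : ∀ s a, ∑ s', P s a s' = 1)
    (r : S → A → ℝ)
    (Φ : S → Fin d → ℝ) (hfeat : ∃ η : Fin d → ℝ, ∀ s, phiDot Φ η s = 1)
    (c : Fin m → S) (hc : Function.Injective c)
    (hcore : ∃ Z : S → Fin m → ℝ, (∀ s i, 0 ≤ Z s i) ∧
      ∀ s j, Φ s j = ∑ i, Z s i * Φ (c i) j)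
    (μ : S → ℝ) (hμ : ∀ s, 0 ≤ μ s) :
    |VLRALP γ P r Φ c μ - ∑ s, μ s * vstar γ P r s| ≤
      10 * (∑ s, |μ s|) * epsApprox Φ (vstar γ P r) / (1 - γ) := by
  have hε := epsApprox_nonneg Φ (vstar γ P r)
  exact (lralp_value_close_general γ hγ0 hγ1 P hP0 hP1 r Φ hfeat c hcore μ hμ).trans
    (by gcongr; norm_num)

end MDPPlan
end

section
/- Under the feature assumption (there exists η ∈ ℝ^d with Φη = 1), every feasible solution λ of CoreLP — that is, every λ ∈ Λ with φ_{s₀}ᵀ + λᵀW(γP − E)Φ = 0ᵀ — satisfies ‖λ‖₁ = 1/(1−γ). -/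
open scoped BigOperators

namespace MDPPlan

variable {S A : Type} [Fintype S] [Fintype A] [DecidableEq S] {d m : ℕ}

/-!
Multiply the constraint `φ_{s₀}ᵀ + λᵀW(γP − E)Φ = 0ᵀ` by `η` on the right. Since `Φη = 1` and the rows
of `P` and `E` sum to one, every row of `(γP − E)Φη` equals `γ − 1`, so the constraint collapses to
`1 − (1 − γ) Σ λ = 0`; for nonnegative `λ` the sum is the `ℓ¹` norm.
-/

section

variable {S A : Type} [Fintype S] {d m : ℕ}

theorem sum_mul_phiDot (w : S → ℝ) (Φ : S → Fin d → ℝ) (θ : Fin d → ℝ) :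
    ∑ s, w s * phiDot Φ θ s = ∑ j, (∑ s, w s * Φ s j) * θ j := by
  simp only [phiDot, Finset.mul_sum, Finset.sum_mul, mul_assoc]
  exact Finset.sum_comm

/-- The matrix `W(γP − E)Φ` of CoreLP, with rows indexed by the pairs `(s, a)`, `s ∈ 𝒮₊`. It is
encoded like a feature matrix, so that `phiDot` also gives the products `W(γP − E)Φθ`. -/
noncomputable def bellmanFeatures (γ : ℝ) (P : S → A → S → ℝ) (Φ : S → Fin d → ℝ) (s₀ : S)
    (c : Fin m → S) : Option (Fin m) × A → Fin d → ℝ :=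
  fun p j => γ * (∑ s', P (splus s₀ c p.1) p.2 s' * Φ s' j) - Φ (splus s₀ c p.1) j

theorem phiDot_bellmanFeatures (γ : ℝ) (P : S → A → S → ℝ) (Φ : S → Fin d → ℝ) (s₀ : S)
    (c : Fin m → S) (θ : Fin d → ℝ) (p : Option (Fin m) × A) :
    phiDot (bellmanFeatures γ P Φ s₀ c) θ p =
      γ * (∑ s', P (splus s₀ c p.1) p.2 s' * phiDot Φ θ s') - phiDot Φ θ (splus s₀ c p.1) := by
  rw [sum_mul_phiDot, Finset.mul_sum]
  simp only [phiDot, bellmanFeatures, sub_mul, mul_assoc, Finset.sum_sub_distrib]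

variable [Fintype A] {γ : ℝ} {P : S → A → S → ℝ} {Φ : S → Fin d → ℝ} {s₀ : S} {c : Fin m → S}
  {lam : Option (Fin m) × A → ℝ}

theorem CoreLPConstraint.phiDot_add_sum_eq_zero (h : CoreLPConstraint γ P Φ s₀ c lam)
    (θ : Fin d → ℝ) :
    phiDot Φ θ s₀ + ∑ p, lam p * phiDot (bellmanFeatures γ P Φ s₀ c) θ p = 0 :=
  calc
    _ = ∑ j, (Φ s₀ j + ∑ p, lam p * bellmanFeatures γ P Φ s₀ c p j) * θ j := by
      rw [sum_mul_phiDot, phiDot, ← Finset.sum_add_distrib]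
      simp only [add_mul]
    _ = 0 := Finset.sum_eq_zero fun j _ => mul_eq_zero_of_left (h j) (θ j)

theorem CoreLPConstraint.sum_mul_one_sub_eq_one (h : CoreLPConstraint γ P Φ s₀ c lam)
    (hP : ∀ s a, ∑ s', P s a s' = 1) (hΦ : ∃ η : Fin d → ℝ, ∀ s, phiDot Φ η s = 1) :
    (∑ p, lam p) * (1 - γ) = 1 := by
  obtain ⟨η, hη⟩ := hΦ
  have collapsed : 1 + (∑ p, lam p) * (γ - 1) = 0 := by
    simpa only [phiDot_bellmanFeatures, hη, hP, mul_one, ← Finset.sum_mul]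
      using h.phiDot_add_sum_eq_zero η
  linarith

theorem corelp_feasible_l1_norm_general (hP : ∀ s a, ∑ s', P s a s' = 1)
    (hΦ : ∃ η : Fin d → ℝ, ∀ s, phiDot Φ η s = 1) (hlam : ∀ p, 0 ≤ lam p)
    (hconstr : CoreLPConstraint γ P Φ s₀ c lam) :
    ∑ p, |lam p| = 1 / (1 - γ) := by
  simp only [abs_of_nonneg (hlam _)]
  exact eq_one_div_of_mul_eq_one_left (hconstr.sum_mul_one_sub_eq_one hP hΦ)

end

/-- every feasible solution of CoreLP has `‖λ‖₁ = 1/(1−γ)`. -/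
theorem corelp_feasible_l1_norm
    {S A : Type} [Fintype S] [Fintype A] [DecidableEq S] [Nonempty S] [Nonempty A]
    {d m : ℕ} (γ : ℝ) (hγ0 : 0 ≤ γ) (hγ1 : γ < 1)
    (P : S → A → S → ℝ) (hP0 : ∀ s a s', 0 ≤ P s a s')
    (hP1 : ∀ s a, ∑ s', P s a s' = 1)
    (Φ : S → Fin d → ℝ) (hfeat : ∃ η : Fin d → ℝ, ∀ s, phiDot Φ η s = 1)
    (c : Fin m → S) (hc : Function.Injective c)
    (s₀ : S)
    (lam : Option (Fin m) × A → ℝ) (hlam : InLambda lam)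
    (hconstr : CoreLPConstraint γ P Φ s₀ c lam) :
    (∑ p : Option (Fin m) × A, |lam p|) = 1 / (1 - γ) :=
  corelp_feasible_l1_norm_general hP1 hfeat hlam.1 hconstr

end MDPPlan
end

section
/- Under the feature and core-state assumptions, the optimal value of CoreLP decomposes as V† = max_{π∈Δ_𝒜} [ Σ_{a∈𝒜} π(a)·r_{s₀a} + V_LRALP(γμ_π) ], where μ_πᵀ = Σ_{a∈𝒜} π(a)·P_{s₀a}. -/
open scoped BigOperators

namespace MDPPlan

variable {S A : Type} [Fintype S] [Fintype A] [DecidableEq S] {d m : ℕ}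

/-!
For a fixed action distribution `π` at `s₀`, maximizing over the core block of `λ` is the dual of
the linear program defining `V_LRALP(γμ_π)`: if `λ ∈ Λ` splits into `π` and a core block `λ*`, then
`f(λ, θ) = ∑ₐ π(a) r_{s₀a} + g_{γμ_π}(λ*, θ)`. The CoreLP constraint says precisely that `f(λ, ·)`
is constant, equivalently, since it is affine, that it is bounded below.

Weak duality gives `≤`. For `≥`, a multiple `Kη` of the weights representing the constant function
`1` is strictly LRALP-feasible once `K(1 - γ) > max r`, so Slater's condition provides a multiplier
`λ*` with `V_LRALP(γμ_π) ≤ g_{γμ_π}(λ*, θ)` for all `θ`. The infimum defining `V_LRALP` is a genuine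
one because `Φθ` attains its minimum over all states at a core state, where LRALP feasibility
bounds it below.
-/

section ConvexDuality

variable {E ι : Type*} {h : ι → E → ℝ} {s : Set E}

/-- The vectors strictly dominating, in every coordinate, some value on `s` of the vector-valued
function with components `h i`. It is the set to be separated from `0` in Gordan's alternative. -/
def strictUpperImage (h : ι → E → ℝ) (s : Set E) : Set (ι → ℝ) :=
  {u | ∃ x ∈ s, ∀ i, h i x < u i}

lemma add_mem_strictUpperImage {u v : ι → ℝ} (hu : u ∈ strictUpperImage h s) (hv : 0 ≤ v) :
    u + v ∈ strictUpperImage h s := by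
  obtain ⟨x, hx, hxu⟩ := hu
  exact ⟨x, hx, fun i => lt_add_of_lt_of_nonneg (hxu i) (hv i)⟩

lemma isOpen_strictUpperImage [Finite ι] : IsOpen (strictUpperImage h s) := by
  have hunion : strictUpperImage h s = ⋃ x ∈ s, Set.univ.pi fun i => Set.Ioi (h i x) := by
    ext u
    simp [strictUpperImage]
  rw [hunion]
  exact isOpen_biUnion fun x _ => isOpen_set_pi Set.finite_univ fun i _ => isOpen_Ioi

lemma map_nonneg_of_pos_on_strictUpperImage {F : (ι → ℝ) →ₗ[ℝ] ℝ}
    (hF : ∀ u ∈ strictUpperImage h s, 0 < F u) (hs : s.Nonempty) {v : ι → ℝ} (hv : 0 ≤ v) :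
    0 ≤ F v := by
  obtain ⟨x, hx⟩ := hs
  have hu : (fun i => h i x + 1) ∈ strictUpperImage h s := ⟨x, hx, fun i => lt_add_one _⟩
  by_contra! hneg
  have hratio : 0 ≤ -(F fun i => h i x + 1) / F v :=
    div_nonneg_of_nonpos (neg_nonpos.2 (hF _ hu).le) hneg.le
  have hpos := hF _ (add_mem_strictUpperImage hu (smul_nonneg hratio hv))
  rw [map_add, map_smul, smul_eq_mul, div_mul_cancel₀ _ hneg.ne, add_neg_cancel] at hpos
  exact hpos.false

lemma map_apply_nonneg_of_pos_on_strictUpperImage {F : (ι → ℝ) →ₗ[ℝ] ℝ}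
    (hF : ∀ u ∈ strictUpperImage h s, 0 < F u) {x : E} (hx : x ∈ s) :
    0 ≤ F fun i => h i x := by
  have hF1 : 0 ≤ F 1 := map_nonneg_of_pos_on_strictUpperImage hF ⟨x, hx⟩ zero_le_one
  refine le_of_forall_pos_le_add fun ε hε => ?_
  have hδ : 0 < ε / (F 1 + 1) := by positivity
  have hmem : (fun i => h i x) + (ε / (F 1 + 1)) • 1 ∈ strictUpperImage h s :=
    ⟨x, hx, fun i => by simpa using hδ⟩
  have hpos := hF _ hmem
  rw [map_add, map_smul, smul_eq_mul] at hpos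
  have hsmall : ε / (F 1 + 1) * F 1 ≤ ε := by
    rw [div_mul_eq_mul_div, div_le_iff₀ (by positivity)]
    nlinarith
  linarith

variable [AddCommGroup E] [Module ℝ E]

lemma convex_strictUpperImage (hs : Convex ℝ s) (hh : ∀ i, ConvexOn ℝ s (h i)) :
    Convex ℝ (strictUpperImage h s) := by
  rintro u ⟨x, hx, hxu⟩ v ⟨y, hy, hyv⟩ a b ha hb hab
  exact ⟨a • x + b • y, hs hx hy ha hb hab, fun i =>
    ((hh i).convex_strict_epigraph (x := (x, u i)) ⟨hx, hxu i⟩ (y := (y, v i)) ⟨hy, hyv i⟩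
      ha hb hab).2⟩

lemma linearMap_eq_zero_of_forall_le {φ : E →ₗ[ℝ] ℝ} {B : ℝ} (hB : ∀ x, B ≤ φ x) : φ = 0 := by
  by_contra hφ
  obtain ⟨x, hx⟩ := φ.surjective hφ (B - 1)
  linarith [hB x]

variable [Fintype ι]

/-- Gordan's theorem of the alternative, with convex in place of linear functions. -/
theorem exists_pos_forall_sum_mul_nonneg (hs : s.Nonempty) (hh : ∀ i, ConvexOn ℝ s (h i))
    (hneg : ∀ x ∈ s, ∃ i, 0 ≤ h i x) :
    ∃ w : ι → ℝ, 0 < w ∧ ∀ x ∈ s, 0 ≤ ∑ i, w i * h i x := by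
  classical
  obtain ⟨x₀, hx₀⟩ := hs
  have hconv : Convex ℝ s := let ⟨i, _⟩ := hneg x₀ hx₀; (hh i).1
  have hzero : (0 : ι → ℝ) ∉ strictUpperImage h s := by
    rintro ⟨x, hx, hlt⟩
    obtain ⟨i, hi⟩ := hneg x hx
    exact hi.not_gt (hlt i)
  obtain ⟨F, hF⟩ := geometric_hahn_banach_point_open (convex_strictUpperImage hconv hh)
    isOpen_strictUpperImage hzero
  simp only [map_zero] at hF
  have hsum (u : ι → ℝ) : F u = ∑ i, F (Pi.single i 1) * u i := by
    conv_lhs => rw [← Finset.univ_sum_single u]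
    simp only [map_sum]
    refine Finset.sum_congr rfl fun i _ => ?_
    rw [← mul_one (u i), ← smul_eq_mul, Pi.single_smul, map_smul, smul_eq_mul, smul_eq_mul,
      mul_one, mul_comm]
  refine ⟨fun i => F (Pi.single i 1), lt_of_le_of_ne (fun i => ?_) fun hw => ?_, fun x hx => ?_⟩
  · exact map_nonneg_of_pos_on_strictUpperImage (F := F.toLinearMap) hF ⟨x₀, hx₀⟩
      (Pi.single_nonneg.2 zero_le_one)
  · have hpos := hF (fun i => h i x₀ + 1) ⟨x₀, hx₀, fun i => lt_add_one _⟩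
    rw [hsum] at hpos
    simp [← congrFun hw] at hpos
  · rw [← hsum fun i => h i x]
    exact map_apply_nonneg_of_pos_on_strictUpperImage (F := F.toLinearMap) hF hx

theorem exists_lagrangeMultipliers_of_slater {f : E → ℝ} {g : ι → E → ℝ} {V : ℝ} {x₀ : E}
    (hf : ConvexOn ℝ s f) (hg : ∀ i, ConvexOn ℝ s (g i))
    (hx₀ : x₀ ∈ s) (hslater : ∀ i, g i x₀ < 0)
    (hV : ∀ x ∈ s, (∀ i, g i x ≤ 0) → V ≤ f x) :
    ∃ w : ι → ℝ, 0 ≤ w ∧ ∀ x ∈ s, V ≤ f x + ∑ i, w i * g i x := by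
  obtain ⟨w, hw, hnonneg⟩ := exists_pos_forall_sum_mul_nonneg (s := s)
    (h := fun o : Option ι => o.elim (fun x => f x + -V) g) ⟨x₀, hx₀⟩
    (Option.forall.2 ⟨hf.add_const (-V), hg⟩) (fun x hx => by
      by_contra! hlt
      have hfx : f x + -V < 0 := hlt none
      linarith [hV x hx fun i => (hlt (some i)).le])
  simp only [Fintype.sum_option, Option.elim_none, Option.elim_some] at hnonneg
  have hw0 : 0 < w none := by
    refine (hw.le none).lt_of_ne fun hnone => hw.ne' ?_
    have hterm : ∀ i ∈ Finset.univ, w (some i) * g i x₀ ≤ 0 := fun i _ =>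
      mul_nonpos_of_nonneg_of_nonpos (hw.le _) (hslater i).le
    have hsum : 0 ≤ ∑ i, w (some i) * g i x₀ := by
      simpa [← hnone] using hnonneg x₀ hx₀
    have hzero := (Finset.sum_eq_zero_iff_of_nonpos hterm).1
      ((Finset.sum_nonpos hterm).antisymm hsum)
    exact funext <| Option.forall.2 ⟨hnone.symm, fun i =>
      (mul_eq_zero.1 (hzero i (Finset.mem_univ i))).resolve_right (hslater i).ne⟩
  refine ⟨fun i => w (some i) / w none, fun i => div_nonneg (hw.le _) hw0.le, fun x hx => ?_⟩
  simp only [div_mul_eq_mul_div, ← Finset.sum_div]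
  have hx' := div_nonneg (hnonneg x hx) hw0.le
  rw [add_div, mul_div_cancel_left₀ _ hw0.ne'] at hx'
  linarith

end ConvexDuality

section LinearPrograms

omit [DecidableEq S]

variable {γ : ℝ} {P : S → A → S → ℝ} {r : S → A → ℝ} {Φ : S → Fin d → ℝ} {c : Fin m → S}
  {s₀ : S} {μ : S → ℝ} {η : Fin d → ℝ} {Z : S → Fin m → ℝ}

/-- The linear functional `θ ↦ φ_sᵀθ`. -/
def phiDotLinear (Φ : S → Fin d → ℝ) (s : S) : (Fin d → ℝ) →ₗ[ℝ] ℝ :=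
  ∑ j, Φ s j • LinearMap.proj j

omit [Fintype S] in
@[simp]
lemma phiDotLinear_apply (Φ : S → Fin d → ℝ) (s : S) (θ : Fin d → ℝ) :
    phiDotLinear Φ s θ = phiDot Φ θ s := by
  simp [phiDotLinear, phiDot]

/-- The row of `(γP − E)Φ` indexed by `(s, a)`, as a linear functional of the weights `θ`. -/
def bellmanRow (γ : ℝ) (P : S → A → S → ℝ) (Φ : S → Fin d → ℝ) (s : S) (a : A) :
    (Fin d → ℝ) →ₗ[ℝ] ℝ :=
  γ • ∑ s', P s a s' • phiDotLinear Φ s' - phiDotLinear Φ s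

omit [Fintype A] in
@[simp]
lemma bellmanRow_apply (γ : ℝ) (P : S → A → S → ℝ) (Φ : S → Fin d → ℝ) (s : S) (a : A)
    (θ : Fin d → ℝ) :
    bellmanRow γ P Φ s a θ = γ * ∑ s', P s a s' * phiDot Φ θ s' - phiDot Φ θ s := by
  simp [bellmanRow]

/-- The left-hand side `φ_{s₀}ᵀ + λᵀW(γP − E)Φ` of the CoreLP constraint, as a linear functional of
the weights `θ`. -/
def coreLPResidual (γ : ℝ) (P : S → A → S → ℝ) (Φ : S → Fin d → ℝ) (s₀ : S) (c : Fin m → S)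
    (lam : Option (Fin m) × A → ℝ) : (Fin d → ℝ) →ₗ[ℝ] ℝ :=
  phiDotLinear Φ s₀ + ∑ p, lam p • bellmanRow γ P Φ (splus s₀ c p.1) p.2

lemma coreLPConstraint_iff_residual_eq_zero {lam : Option (Fin m) × A → ℝ} :
    CoreLPConstraint γ P Φ s₀ c lam ↔ coreLPResidual γ P Φ s₀ c lam = 0 := by
  have hsingle (s : S) (j : Fin d) : phiDot Φ (Pi.single j 1) s = Φ s j := by
    simp [phiDot, Pi.single_apply]
  have hcoord (j : Fin d) : coreLPResidual γ P Φ s₀ c lam (Pi.single j 1) =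
      Φ s₀ j + ∑ p : Option (Fin m) × A, lam p *
        (γ * (∑ s', P (splus s₀ c p.1) p.2 s' * Φ s' j) - Φ (splus s₀ c p.1) j) := by
    simp [coreLPResidual, hsingle]
  simp only [CoreLPConstraint, ← hcoord]
  exact ⟨fun h => LinearMap.pi_ext' fun j => LinearMap.ext_ring (h j), fun h j => by simp [h]⟩

lemma fObj_eq_add_residual (lam : Option (Fin m) × A → ℝ) (θ : Fin d → ℝ) :
    fObj γ P r Φ s₀ c lam θ = CoreLPObj r s₀ c lam + coreLPResidual γ P Φ s₀ c lam θ := by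
  simp [fObj, coreLPResidual, add_assoc]

lemma fObj_eq_coreLPObj {lam : Option (Fin m) × A → ℝ} (hlam : CoreLPConstraint γ P Φ s₀ c lam)
    (θ : Fin d → ℝ) : fObj γ P r Φ s₀ c lam θ = CoreLPObj r s₀ c lam := by
  simp [fObj_eq_add_residual, coreLPConstraint_iff_residual_eq_zero.1 hlam]

lemma coreLPConstraint_of_forall_le_fObj {lam : Option (Fin m) × A → ℝ} {B : ℝ}
    (hB : ∀ θ, B ≤ fObj γ P r Φ s₀ c lam θ) : CoreLPConstraint γ P Φ s₀ c lam := by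
  refine coreLPConstraint_iff_residual_eq_zero.2
    (linearMap_eq_zero_of_forall_le (B := B - CoreLPObj r s₀ c lam) fun θ => ?_)
  rw [sub_le_iff_le_add', ← fObj_eq_add_residual]
  exact hB θ

/-- The weights `γμ_π`, where `μ_π` is the distribution of the state reached from `s₀` by an
action drawn from `π`. -/
def discountedNextState (γ : ℝ) (P : S → A → S → ℝ) (s₀ : S) (π : A → ℝ) : S → ℝ :=
  fun s => γ * ∑ a, π a * P s₀ a s

omit [Fintype S] in
lemma discountedNextState_nonneg (hγ0 : 0 ≤ γ) (hP0 : ∀ s a s', 0 ≤ P s a s') {π : A → ℝ}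
    (hπ : ∀ a, 0 ≤ π a) (s : S) : 0 ≤ discountedNextState γ P s₀ π s :=
  mul_nonneg hγ0 (Finset.sum_nonneg fun a _ => mul_nonneg (hπ a) (hP0 s₀ a s))

lemma sum_discountedNextState_mul (π : A → ℝ) (v : S → ℝ) :
    ∑ s, discountedNextState γ P s₀ π s * v s = ∑ a, π a * (γ * ∑ s, P s₀ a s * v s) := by
  simp only [discountedNextState, Finset.mul_sum, Finset.sum_mul]
  rw [Finset.sum_comm]
  exact Finset.sum_congr rfl fun a _ => Finset.sum_congr rfl fun s _ => by ring

omit [Fintype S] in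
lemma sum_splus (lam : Option (Fin m) × A → ℝ) (q : S → A → ℝ) :
    ∑ p, lam p * q (splus s₀ c p.1) p.2 =
      ∑ a, lam (none, a) * q s₀ a + ∑ p : Fin m × A, lam (some p.1, p.2) * q (c p.1) p.2 := by
  simp [Fintype.sum_prod_type, Fintype.sum_option, splus]

lemma fObj_eq_add_gObj {lam : Option (Fin m) × A → ℝ} (hlam : ∑ a, lam (none, a) = 1)
    (θ : Fin d → ℝ) :
    fObj γ P r Φ s₀ c lam θ = ∑ a, lam (none, a) * r s₀ a +
      gObj γ P r Φ c (discountedNextState γ P s₀ fun a => lam (none, a))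
        (fun p => lam (some p.1, p.2)) θ := by
  have hroot : ∑ a, lam (none, a) * (γ * ∑ s, P s₀ a s * phiDot Φ θ s - phiDot Φ θ s₀) =
      ∑ s, discountedNextState γ P s₀ (fun a => lam (none, a)) s * phiDot Φ θ s -
        phiDot Φ θ s₀ := by
    simp only [sum_discountedNextState_mul, mul_sub, Finset.sum_sub_distrib, ← Finset.sum_mul,
      hlam, one_mul]
  rw [fObj, CoreLPObj, gObj, sum_splus,
    sum_splus lam fun s a => γ * ∑ s', P s a s' * phiDot Φ θ s' - phiDot Φ θ s, hroot]
  ring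

lemma gObj_eq_add_sum (l : Fin m × A → ℝ) (θ : Fin d → ℝ) :
    gObj γ P r Φ c μ l θ = ∑ s, μ s * phiDot Φ θ s +
      ∑ p, l p * (r (c p.1) p.2 + bellmanRow γ P Φ (c p.1) p.2 θ) := by
  simp only [gObj, bellmanRow_apply, mul_add, Finset.sum_add_distrib]
  ring

omit [Fintype A] in
lemma lralpFeasible_iff {θ : Fin d → ℝ} :
    LRALPFeasible γ P r Φ c θ ↔
      ∀ p : Fin m × A, r (c p.1) p.2 + bellmanRow γ P Φ (c p.1) p.2 θ ≤ 0 := by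
  simp [LRALPFeasible]

lemma gObj_le_of_lralpFeasible {l : Fin m × A → ℝ} (hl : ∀ p, 0 ≤ l p) {θ : Fin d → ℝ}
    (hθ : LRALPFeasible γ P r Φ c θ) : gObj γ P r Φ c μ l θ ≤ ∑ s, μ s * phiDot Φ θ s := by
  rw [gObj_eq_add_sum]
  exact add_le_of_nonpos_right (Finset.sum_nonpos fun p _ =>
    mul_nonpos_of_nonneg_of_nonpos (hl p) (lralpFeasible_iff.1 hθ p))

omit [Fintype A] in
lemma exists_forall_reward_add_bellmanRow_neg (hγ0 : 0 ≤ γ) (hγ1 : γ < 1)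
    (hP1 : ∀ s a, ∑ s', P s a s' ≤ 1) (hη : ∀ s, phiDot Φ η s = 1) {B : ℝ}
    (hB : ∀ i a, r (c i) a ≤ B) :
    ∃ θ, ∀ p : Fin m × A, r (c p.1) p.2 + bellmanRow γ P Φ (c p.1) p.2 θ < 0 := by
  set K := (|B| + 1) / (1 - γ)
  have hK0 : 0 ≤ K := div_nonneg (by positivity) (sub_nonneg.2 hγ1.le)
  have hK : K * (1 - γ) = |B| + 1 := div_mul_cancel₀ _ (sub_pos.2 hγ1).ne'
  refine ⟨K • η, fun ⟨i, a⟩ => ?_⟩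
  have hr : r (c i) a ≤ |B| := (hB i a).trans (le_abs_self B)
  have hmass := mul_le_mul_of_nonneg_left (hP1 (c i) a) (mul_nonneg hK0 hγ0)
  rw [map_smul, bellmanRow_apply, smul_eq_mul]
  simp only [hη, mul_one]
  linarith

omit [Fintype S] in
lemma phiDot_eq_sum_core (hZ : ∀ s j, Φ s j = ∑ i, Z s i * Φ (c i) j) (θ : Fin d → ℝ) (s : S) :
    phiDot Φ θ s = ∑ i, Z s i * phiDot Φ θ (c i) := by
  simp only [phiDot, hZ s, Finset.sum_mul, Finset.mul_sum, mul_assoc]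
  exact Finset.sum_comm

omit [Fintype S] in
lemma exists_core_forall_phiDot_le [Nonempty S] (hη : ∀ s, phiDot Φ η s = 1)
    (hZ0 : ∀ s i, 0 ≤ Z s i) (hZ : ∀ s j, Φ s j = ∑ i, Z s i * Φ (c i) j) (θ : Fin d → ℝ) :
    ∃ i, ∀ s, phiDot Φ θ (c i) ≤ phiDot Φ θ s := by
  have hZ1 (s : S) : ∑ i, Z s i = 1 := by
    simpa [hη] using (phiDot_eq_sum_core hZ η s).symm
  have : Nonempty (Fin m) := by
    by_contra! hempty
    simpa using hZ1 (Classical.arbitrary S)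
  obtain ⟨i, hi⟩ := Finite.exists_min fun i => phiDot Φ θ (c i)
  refine ⟨i, fun s => ?_⟩
  calc phiDot Φ θ (c i) = ∑ k, Z s k * phiDot Φ θ (c i) := by
        rw [← Finset.sum_mul, hZ1, one_mul]
    _ ≤ ∑ k, Z s k * phiDot Φ θ (c k) :=
        Finset.sum_le_sum fun k _ => mul_le_mul_of_nonneg_left (hi k) (hZ0 s k)
    _ = phiDot Φ θ s := (phiDot_eq_sum_core hZ θ s).symm

omit [Fintype A] in
lemma neg_div_le_phiDot_of_lralpFeasible [Nonempty A] (hγ0 : 0 ≤ γ) (hγ1 : γ < 1)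
    (hP0 : ∀ s a s', 0 ≤ P s a s') (hP1 : ∀ s a, ∑ s', P s a s' ≤ 1)
    (hη : ∀ s, phiDot Φ η s = 1)
    (hZ0 : ∀ s i, 0 ≤ Z s i) (hZ : ∀ s j, Φ s j = ∑ i, Z s i * Φ (c i) j)
    {B : ℝ} (hB : ∀ i a, |r (c i) a| ≤ B)
    {θ : Fin d → ℝ} (hθ : LRALPFeasible γ P r Φ c θ) (s : S) :
    -B / (1 - γ) ≤ phiDot Φ θ s := by
  have : Nonempty S := ⟨s⟩
  obtain ⟨i, hi⟩ := exists_core_forall_phiDot_le hη hZ0 hZ θ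
  let a : A := Classical.arbitrary A
  set x := phiDot Φ θ (c i)
  refine le_trans ?_ (hi s)
  rw [div_le_iff₀ (sub_pos.2 hγ1)]
  rcases le_total 0 x with hx | hx
  · have hB0 : 0 ≤ B := (abs_nonneg _).trans (hB i a)
    exact (neg_nonpos.2 hB0).trans (mul_nonneg hx (sub_nonneg.2 hγ1.le))
  · have hnext : x ≤ ∑ s', P (c i) a s' * phiDot Φ θ s' :=
      calc x ≤ (∑ s', P (c i) a s') * x := le_mul_of_le_one_left hx (hP1 (c i) a)
        _ = ∑ s', P (c i) a s' * x := Finset.sum_mul ..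
        _ ≤ ∑ s', P (c i) a s' * phiDot Φ θ s' :=
            Finset.sum_le_sum fun s' _ => mul_le_mul_of_nonneg_left (hi s') (hP0 _ _ _)
    have hr := neg_le_of_abs_le (hB i a)
    linarith [hθ i a, mul_le_mul_of_nonneg_left hnext hγ0]

/-- The values `μᵀΦθ` of the LRALP objective at feasible weights, whose infimum is `V_LRALP(μ)`. -/
def lralpValues (γ : ℝ) (P : S → A → S → ℝ) (r : S → A → ℝ) (Φ : S → Fin d → ℝ) (c : Fin m → S)
    (μ : S → ℝ) : Set ℝ :=
  {x | ∃ θ, LRALPFeasible γ P r Φ c θ ∧ x = ∑ s, μ s * phiDot Φ θ s}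

omit [Fintype A] in
lemma bddBelow_lralpValues (hμ : ∀ s, 0 ≤ μ s) {b : ℝ}
    (hb : ∀ θ, LRALPFeasible γ P r Φ c θ → ∀ s, b ≤ phiDot Φ θ s) :
    BddBelow (lralpValues γ P r Φ c μ) := by
  refine ⟨∑ s, μ s * b, ?_⟩
  rintro _ ⟨θ, hθ, rfl⟩
  exact Finset.sum_le_sum fun s _ => mul_le_mul_of_nonneg_left (hb θ hθ s) (hμ s)

theorem exists_forall_vlralp_le_gObj
    (hslater : ∃ θ, ∀ p : Fin m × A, r (c p.1) p.2 + bellmanRow γ P Φ (c p.1) p.2 θ < 0)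
    (hbdd : BddBelow (lralpValues γ P r Φ c μ)) :
    ∃ l : Fin m × A → ℝ, 0 ≤ l ∧ ∀ θ, VLRALP γ P r Φ c μ ≤ gObj γ P r Φ c μ l θ := by
  obtain ⟨θ₀, hθ₀⟩ := hslater
  have hvalue (θ : Fin d → ℝ) :
      (∑ s, μ s • phiDotLinear Φ s) θ = ∑ s, μ s * phiDot Φ θ s := by simp
  obtain ⟨l, hl, hle⟩ := exists_lagrangeMultipliers_of_slater
    (g := fun (p : Fin m × A) θ => r (c p.1) p.2 + bellmanRow γ P Φ (c p.1) p.2 θ)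
    (V := VLRALP γ P r Φ c μ)
    (LinearMap.convexOn (∑ s, μ s • phiDotLinear Φ s) convex_univ)
    (fun p => (convexOn_const _ convex_univ).add (LinearMap.convexOn _ convex_univ))
    (Set.mem_univ θ₀) hθ₀
    (fun θ _ hθ => csInf_le hbdd ⟨θ, lralpFeasible_iff.2 hθ, hvalue θ⟩)
  refine ⟨l, hl, fun θ => ?_⟩
  rw [gObj_eq_add_sum, ← hvalue]
  exact hle θ (Set.mem_univ θ)

lemma coreLPObj_le_add_vlralp (hfeas : ∃ θ, LRALPFeasible γ P r Φ c θ)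
    {lam : Option (Fin m) × A → ℝ} (hlam : InLambda lam)
    (hcon : CoreLPConstraint γ P Φ s₀ c lam) :
    CoreLPObj r s₀ c lam ≤ ∑ a, lam (none, a) * r s₀ a +
      VLRALP γ P r Φ c (discountedNextState γ P s₀ fun a => lam (none, a)) := by
  obtain ⟨θ₀, hθ₀⟩ := hfeas
  rw [← sub_le_iff_le_add']
  refine le_csInf ⟨_, θ₀, hθ₀, rfl⟩ ?_
  rintro _ ⟨θ, hθ, rfl⟩
  rw [sub_le_iff_le_add', ← fObj_eq_coreLPObj hcon θ, fObj_eq_add_gObj hlam.2]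
  gcongr
  exact gObj_le_of_lralpFeasible (fun p => hlam.1 _) hθ

lemma exists_le_coreLPObj_of_forall_le_gObj {π : A → ℝ} (hπ0 : ∀ a, 0 ≤ π a) (hπ1 : ∑ a, π a = 1)
    {l : Fin m × A → ℝ} (hl : 0 ≤ l) {V : ℝ}
    (hV : ∀ θ, V ≤ gObj γ P r Φ c (discountedNextState γ P s₀ π) l θ) :
    ∃ lam, InLambda lam ∧ CoreLPConstraint γ P Φ s₀ c lam ∧
      ∑ a, π a * r s₀ a + V ≤ CoreLPObj r s₀ c lam := by
  let lam : Option (Fin m) × A → ℝ := fun p => p.1.elim (π p.2) fun i => l (i, p.2)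
  have hlam : InLambda lam := ⟨Prod.forall.2 <| Option.forall.2 ⟨hπ0, fun i a => hl (i, a)⟩, hπ1⟩
  have hle (θ : Fin d → ℝ) : ∑ a, π a * r s₀ a + V ≤ fObj γ P r Φ s₀ c lam θ := by
    rw [fObj_eq_add_gObj hlam.2]
    exact add_le_add_right (hV θ) _
  have hcon := coreLPConstraint_of_forall_le_fObj hle
  exact ⟨lam, hlam, hcon, (hle 0).trans_eq (fObj_eq_coreLPObj hcon 0)⟩

end LinearPrograms

lemma abs_apply_apply_le_norm {ι κ : Type*} [Fintype ι] [Fintype κ] (q : ι → κ → ℝ) (i : ι)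
    (k : κ) : |q i k| ≤ ‖q‖ :=
  (norm_le_pi_norm (q i) k).trans (norm_le_pi_norm q i)

theorem vdagger_decomposition_general
    {S A : Type} [Fintype S] [Fintype A] [Nonempty A]
    {d m : ℕ} (γ : ℝ) (hγ0 : 0 ≤ γ) (hγ1 : γ < 1)
    (P : S → A → S → ℝ) (hP0 : ∀ s a s', 0 ≤ P s a s')
    (hP1 : ∀ s a, ∑ s', P s a s' ≤ 1)
    (r : S → A → ℝ)
    (Φ : S → Fin d → ℝ) (hfeat : ∃ η : Fin d → ℝ, ∀ s, phiDot Φ η s = 1)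
    (c : Fin m → S)
    (hcore : ∃ Z : S → Fin m → ℝ, (∀ s i, 0 ≤ Z s i) ∧
      ∀ s j, Φ s j = ∑ i, Z s i * Φ (c i) j)
    (s₀ : S) :
    Vdagger γ P r Φ s₀ c =
      ⨆ π : {π : A → ℝ // (∀ a, 0 ≤ π a) ∧ ∑ a, π a = 1},
        ((∑ a, π.1 a * r s₀ a) +
          VLRALP γ P r Φ c (fun s => γ * ∑ a, π.1 a * P s₀ a s)) := by
  obtain ⟨η, hη⟩ := hfeat
  obtain ⟨Z, hZ0, hZ⟩ := hcore
  have hB (i : Fin m) (a : A) : |r (c i) a| ≤ ‖r‖ := abs_apply_apply_le_norm r (c i) a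
  have hslater := exists_forall_reward_add_bellmanRow_neg hγ0 hγ1 hP1 hη
    fun i a => le_of_abs_le (hB i a)
  have hfeas : ∃ θ, LRALPFeasible γ P r Φ c θ :=
    hslater.imp fun θ hθ => lralpFeasible_iff.2 fun p => (hθ p).le
  refine csSup_eq_csSup_of_forall_exists_le ?_ ?_
  · rintro _ ⟨lam, hlam, hcon, rfl⟩
    exact ⟨_, ⟨⟨fun a => lam (none, a), fun a => hlam.1 _, hlam.2⟩, rfl⟩,
      coreLPObj_le_add_vlralp hfeas hlam hcon⟩
  · rintro _ ⟨⟨π, hπ0, hπ1⟩, rfl⟩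
    have hbdd := bddBelow_lralpValues (discountedNextState_nonneg (s₀ := s₀) hγ0 hP0 hπ0)
      fun θ => neg_div_le_phiDot_of_lralpFeasible hγ0 hγ1 hP0 hP1 hη hZ0 hZ hB (θ := θ)
    obtain ⟨l, hl, hle⟩ := exists_forall_vlralp_le_gObj hslater hbdd
    obtain ⟨lam, hlam, hcon, hobj⟩ := exists_le_coreLPObj_of_forall_le_gObj hπ0 hπ1 hl hle
    exact ⟨_, ⟨lam, hlam, hcon, rfl⟩, hobj⟩

/-- decomposition of `V†` over action distributions via `V_LRALP`. -/
theorem vdagger_decomposition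
    {S A : Type} [Fintype S] [Fintype A] [DecidableEq S] [Nonempty S] [Nonempty A]
    {d m : ℕ} (γ : ℝ) (hγ0 : 0 ≤ γ) (hγ1 : γ < 1)
    (P : S → A → S → ℝ) (hP0 : ∀ s a s', 0 ≤ P s a s')
    (hP1 : ∀ s a, ∑ s', P s a s' = 1)
    (r : S → A → ℝ)
    (Φ : S → Fin d → ℝ) (hfeat : ∃ η : Fin d → ℝ, ∀ s, phiDot Φ η s = 1)
    (c : Fin m → S) (hc : Function.Injective c)
    (hcore : ∃ Z : S → Fin m → ℝ, (∀ s i, 0 ≤ Z s i) ∧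
      ∀ s j, Φ s j = ∑ i, Z s i * Φ (c i) j)
    (s₀ : S) :
    Vdagger γ P r Φ s₀ c =
      ⨆ π : {π : A → ℝ // (∀ a, 0 ≤ π a) ∧ ∑ a, π a = 1},
        ((∑ a, π.1 a * r s₀ a) +
          VLRALP γ P r Φ c (fun s => γ * ∑ a, π.1 a * P s₀ a s)) :=
  vdagger_decomposition_general γ hγ0 hγ1 P hP0 (fun s a => (hP1 s a).le) r Φ hfeat c hcore s₀

end MDPPlan
end
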